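/- arXiv:0709.3541 — 3 statements merged into one kernel-verified Lean document; each statement's English description precedes it below -/
import Mathlib

section
/- Let H be an invertible 2×2 real matrix, g ∈ ℝ² with gᵀ(HᵀH)⁻¹g > 1, let q ∈ ℝ² be a unit vector satisfying ‖H q‖ > |gᵀ q|, and let q⊥ ∈ ℝ² be a unit vector with qᵀ q⊥ = 0. Assume gᵀ(HᵀH)⁻¹q⊥ ≠ 0, and define α* by 1/α* = gᵀ(HᵀH)⁻¹q⊥ / (1 − gᵀ(HᵀH)⁻¹g) and a* = H^{-T}(α* q⊥ + g). Then ‖a*‖ < 1. -/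
open Matrix

/-!
Put `u = H⁻ᵀ g` and `v = H⁻ᵀ q⊥`, so that `a* = α* v + u` lies on the line through `u` in the
direction `v`. The defining equation of `α*` says exactly that `⟪u, a*⟫ = 1`: the points `u` and
`a*` are conjugate with respect to the unit sphere. A line through two conjugate points, neither of
which lies in the open unit ball, misses that ball. Here `‖u‖ > 1`, and the line does meet the ball
at the foot of the perpendicular from the origin, since `‖H q‖ > |gᵀ q|` reads `|⟪u, H q⟫| < ‖H q‖`
and, in the plane, `H q` spans the orthogonal complement of `v`. Hence `‖a*‖ < 1`. In higher
dimensions the same argument needs `‖H q‖ > |gᵀ q|` for every nonzero `q` orthogonal to `q⊥`.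
-/

open WithLp (toLp ofLp)
open scoped RealInnerProductSpace

section Conjugate

variable {E : Type*} [NormedAddCommGroup E] [InnerProductSpace ℝ E] {u v a p : E} {r : ℝ}

lemma le_norm_lineMap_of_inner_eq_sq (hr : 0 ≤ r) (hu : r ≤ ‖u‖) (ha : r ≤ ‖a‖)
    (hua : ⟪u, a⟫ = r ^ 2) (t : ℝ) : r ≤ ‖AffineMap.lineMap u a t‖ := by
  refine (sq_le_sq₀ hr (norm_nonneg _)).mp ?_
  calc
    r ^ 2 = (1 - t) ^ 2 * r ^ 2 + 2 * ((1 - t) * t) * r ^ 2 + t ^ 2 * r ^ 2 := by ring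
    _ ≤ (1 - t) ^ 2 * ‖u‖ ^ 2 + 2 * ((1 - t) * t) * r ^ 2 + t ^ 2 * ‖a‖ ^ 2 := by gcongr
    _ = ‖AffineMap.lineMap u a t‖ ^ 2 := by
      rw [AffineMap.lineMap_apply_module, norm_add_sq_real, norm_smul, norm_smul, mul_pow, mul_pow,
        Real.norm_eq_abs, Real.norm_eq_abs, sq_abs, sq_abs, real_inner_smul_left,
        real_inner_smul_right, hua]
      ring

lemma norm_lt_of_inner_eq_sq_of_mem_line (hu : r ≤ ‖u‖) (hua : ⟪u, a⟫ = r ^ 2)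
    (hp : p ∈ line[ℝ, u, a]) (hpr : ‖p‖ < r) : ‖a‖ < r := by
  obtain ⟨t, rfl⟩ := mem_affineSpan_pair_iff_exists_lineMap_eq.mp hp
  by_contra! ha
  exact hpr.not_ge (le_norm_lineMap_of_inner_eq_sq ((norm_nonneg _).trans hpr.le) hu ha hua t)

lemma norm_starProjection_lt_of_abs_inner_lt {K : Submodule ℝ E} [K.HasOrthogonalProjection]
    (hr : 0 < r) (h : ∀ w ∈ K, w ≠ 0 → |⟪u, w⟫| < r * ‖w‖) : ‖K.starProjection u‖ < r := by
  set p := K.starProjection u with hp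
  have hpK : p ∈ K := K.starProjection_apply_mem u
  have hup : ⟪u, p⟫ = ‖p‖ * ‖p‖ := by
    rw [← real_inner_self_eq_norm_mul_norm, hp, K.inner_starProjection_left_eq_right,
      K.starProjection_eq_self_iff.mpr hpK]
  rcases eq_or_ne p 0 with hp0 | hp0
  · rwa [hp0, norm_zero]
  · have hlt : ‖p‖ * ‖p‖ < r * ‖p‖ := hup ▸ (le_abs_self _).trans_lt (h p hpK hp0)
    exact lt_of_mul_lt_mul_right hlt (norm_nonneg p)

lemma norm_smul_add_lt_of_inner_eq_sq {α : ℝ} (hr : 0 < r) (hu : r < ‖u‖)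
    (hα : ⟪u, α • v + u⟫ = r ^ 2) (h : ∀ w ∈ (ℝ ∙ v)ᗮ, w ≠ 0 → |⟪u, w⟫| < r * ‖w‖) :
    ‖α • v + u‖ < r := by
  have hα0 : α ≠ 0 := by
    rintro rfl
    rw [zero_smul, zero_add, real_inner_self_eq_norm_sq] at hα
    exact (pow_lt_pow_left₀ hu hr.le two_ne_zero).ne' hα
  refine norm_lt_of_inner_eq_sq_of_mem_line hu.le hα ?_
    (norm_starProjection_lt_of_abs_inner_lt hr h)
  obtain ⟨s, hs⟩ := Submodule.mem_span_singleton.mp ((ℝ ∙ v).starProjection_apply_mem u)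
  refine mem_affineSpan_pair_iff_exists_lineMap_eq.mpr ⟨-s / α, ?_⟩
  rw [Submodule.starProjection_orthogonal_val, ← hs, AffineMap.lineMap_apply, vsub_eq_sub,
    vadd_eq_add, add_sub_cancel_right, smul_smul, div_mul_cancel₀ _ hα0, neg_smul, neg_add_eq_sub]

end Conjugate

section DotProduct

variable {m n R : Type*} [Fintype m] [Fintype n]

lemma dotProduct_eq_inner_toLp (x y : n → ℝ) : x ⬝ᵥ y = ⟪toLp 2 x, toLp 2 y⟫ := by
  rw [EuclideanSpace.inner_toLp_toLp, star_trivial, dotProduct_comm]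

lemma sqrt_dotProduct_self (x : n → ℝ) : √(x ⬝ᵥ x) = ‖toLp 2 x‖ := by
  rw [dotProduct_eq_inner_toLp, norm_eq_sqrt_real_inner]

lemma dotProduct_inv_transpose_mul_self_mulVec [DecidableEq n] [CommRing R] (H : Matrix n n R)
    (x y : n → R) : x ⬝ᵥ (Hᵀ * H)⁻¹ *ᵥ y = (Hᵀ)⁻¹ *ᵥ x ⬝ᵥ (Hᵀ)⁻¹ *ᵥ y := by
  rw [Matrix.mul_inv_rev, ← mulVec_mulVec, dotProduct_mulVec, ← mulVec_transpose,
    transpose_nonsing_inv]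

lemma inv_mulVec_dotProduct [DecidableEq n] [CommRing R] (H : Matrix n n R) (x y : n → R) :
    H⁻¹ *ᵥ x ⬝ᵥ y = x ⬝ᵥ (Hᵀ)⁻¹ *ᵥ y := by
  rw [← transpose_nonsing_inv, mulVec_transpose, dotProduct_comm, dotProduct_mulVec,
    dotProduct_comm]

lemma abs_inner_inv_transpose_mulVec_lt [DecidableEq n] {H : Matrix n n ℝ} (hH : IsUnit H.det)
    {g y : n → ℝ} (h : ∀ x ≠ 0, x ⬝ᵥ y = 0 → |g ⬝ᵥ x| < √(H *ᵥ x ⬝ᵥ H *ᵥ x))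
    {w : EuclideanSpace ℝ n} (hw : w ≠ 0) (hwy : ⟪w, toLp 2 ((Hᵀ)⁻¹ *ᵥ y)⟫ = 0) :
    |⟪toLp 2 ((Hᵀ)⁻¹ *ᵥ g), w⟫| < ‖w‖ := by
  have hHw : H *ᵥ H⁻¹ *ᵥ ofLp w = ofLp w := by
    rw [mulVec_mulVec, mul_nonsing_inv _ hH, one_mulVec]
  have hx0 : H⁻¹ *ᵥ ofLp w ≠ 0 := by
    intro hx
    rw [hx, mulVec_zero] at hHw
    exact hw ((WithLp.ofLp_eq_zero 2).mp hHw.symm)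
  have hlt := h _ hx0 (by rwa [inv_mulVec_dotProduct, dotProduct_eq_inner_toLp])
  rwa [dotProduct_comm, inv_mulVec_dotProduct, dotProduct_eq_inner_toLp, real_inner_comm, hHw,
    sqrt_dotProduct_self] at hlt

lemma exists_smul_eq_of_dotProduct_eq_zero {x y z : Fin 2 → ℝ} (hx : x ≠ 0) (hz : z ≠ 0)
    (hxz : x ⬝ᵥ z = 0) (hyz : y ⬝ᵥ z = 0) : ∃ c : ℝ, c • x = y := by
  rw [dotProduct_comm, dotProduct_eq_inner_toLp] at hxz hyz
  have : Fact (Module.finrank ℝ (EuclideanSpace ℝ (Fin 2)) = 2) := ⟨finrank_euclideanSpace_fin⟩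
  obtain ⟨c, hc⟩ := Submodule.mem_span_singleton.mp <|
    Submodule.mem_span_singleton_of_inner_eq_zero_of_inner_eq_zero
      ((WithLp.toLp_eq_zero 2).not.mpr hz) ((WithLp.toLp_eq_zero 2).not.mpr hx) hyz hxz
  exact ⟨c, congrArg ofLp hc⟩

lemma abs_dotProduct_lt_of_dotProduct_eq_zero {H : Matrix m (Fin 2) ℝ} {g x y z : Fin 2 → ℝ}
    (hx : |g ⬝ᵥ x| < √(H *ᵥ x ⬝ᵥ H *ᵥ x)) (hz : z ≠ 0) (hxz : x ⬝ᵥ z = 0) (hy : y ≠ 0)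
    (hyz : y ⬝ᵥ z = 0) : |g ⬝ᵥ y| < √(H *ᵥ y ⬝ᵥ H *ᵥ y) := by
  have hx0 : x ≠ 0 := by
    rintro rfl
    simp at hx
  obtain ⟨c, rfl⟩ := exists_smul_eq_of_dotProduct_eq_zero hx0 hz hxz hyz
  have hc : 0 < |c| := abs_pos.mpr (left_ne_zero_of_smul hy)
  rw [sqrt_dotProduct_self] at hx ⊢
  rw [dotProduct_smul, smul_eq_mul, abs_mul, mulVec_smul, WithLp.toLp_smul, norm_smul,
    Real.norm_eq_abs]
  exact mul_lt_mul_of_pos_left hx hc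

end DotProduct

theorem stmt8_general {n : Type*} [Fintype n] [DecidableEq n] (H : Matrix n n ℝ) (g qp : n → ℝ)
    (alphas : ℝ) (hH : IsUnit H.det) (hg : 1 < g ⬝ᵥ (Hᵀ * H)⁻¹ *ᵥ g)
    (hHq : ∀ q ≠ 0, q ⬝ᵥ qp = 0 → |g ⬝ᵥ q| < √(H *ᵥ q ⬝ᵥ H *ᵥ q))
    (hgqp : g ⬝ᵥ (Hᵀ * H)⁻¹ *ᵥ qp ≠ 0)
    (halphas : 1 / alphas = (g ⬝ᵥ (Hᵀ * H)⁻¹ *ᵥ qp) / (1 - g ⬝ᵥ (Hᵀ * H)⁻¹ *ᵥ g)) :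
    √((Hᵀ)⁻¹ *ᵥ (alphas • qp + g) ⬝ᵥ (Hᵀ)⁻¹ *ᵥ (alphas • qp + g)) < 1 := by
  simp only [dotProduct_inv_transpose_mul_self_mulVec, dotProduct_eq_inner_toLp]
    at hg hgqp halphas
  rw [sqrt_dotProduct_self, mulVec_add, mulVec_smul, WithLp.toLp_add, WithLp.toLp_smul]
  set u := toLp 2 ((Hᵀ)⁻¹ *ᵥ g)
  set v := toLp 2 ((Hᵀ)⁻¹ *ᵥ qp)
  have hu : 1 < ‖u‖ := by rwa [real_inner_self_eq_norm_sq, one_lt_sq_iff₀ (norm_nonneg u)] at hg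
  have hα : alphas = (1 - ⟪u, u⟫) / ⟪u, v⟫ := by rw [← inv_div, ← halphas, one_div, inv_inv]
  have hconj : ⟪u, alphas • v + u⟫ = 1 ^ 2 := by
    rw [inner_add_right, real_inner_smul_right, hα, div_mul_cancel₀ _ hgqp, sub_add_cancel, one_pow]
  refine norm_smul_add_lt_of_inner_eq_sq one_pos hu hconj fun w hwv hw ↦ ?_
  rw [one_mul]
  exact abs_inner_inv_transpose_mulVec_lt hH hHq hw
    (Submodule.mem_orthogonal_singleton_iff_inner_left.mp hwv)

/-- Let `H` be invertible 2×2, `g` with `gᵀ(HᵀH)⁻¹g > 1`, `q` a unit vector with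
`‖H q‖ > |gᵀ q|`, and `q⊥` a unit vector orthogonal to `q` with
`gᵀ(HᵀH)⁻¹q⊥ ≠ 0`. Define `α*` by `1/α* = gᵀ(HᵀH)⁻¹q⊥ / (1 − gᵀ(HᵀH)⁻¹g)` and
`a* = H^{-T}(α* q⊥ + g)`. Then `‖a*‖ < 1`. -/
theorem stmt8 (H : Matrix (Fin 2) (Fin 2) ℝ) (g q qp : Fin 2 → ℝ) (alphas : ℝ)
    (hH : IsUnit H.det) (hg : 1 < g ⬝ᵥ (Hᵀ * H)⁻¹.mulVec g)
    (hq : q ⬝ᵥ q = 1)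
    (hHq : |g ⬝ᵥ q| < Real.sqrt (H.mulVec q ⬝ᵥ H.mulVec q))
    (hqp : qp ⬝ᵥ qp = 1) (horth : q ⬝ᵥ qp = 0)
    (hgqp : g ⬝ᵥ (Hᵀ * H)⁻¹.mulVec qp ≠ 0)
    (halphas : 1 / alphas =
      (g ⬝ᵥ (Hᵀ * H)⁻¹.mulVec qp) / (1 - g ⬝ᵥ (Hᵀ * H)⁻¹.mulVec g)) :
    Real.sqrt ((Hᵀ)⁻¹.mulVec (alphas • qp + g) ⬝ᵥ (Hᵀ)⁻¹.mulVec (alphas • qp + g))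
      < 1 := by
  have hqp0 : qp ≠ 0 := by
    rintro rfl
    simp at hqp
  exact stmt8_general H g qp alphas hH hg
    (fun _ ↦ abs_dotProduct_lt_of_dotProduct_eq_zero hHq hqp0 horth) hgqp halphas
end

section
/- Let H be an invertible 2×2 real matrix, g ∈ ℝ² with gᵀ(HᵀH)⁻¹g > 1, and P > 0. Let λ₁ be the largest eigenvalue of (I + P·g gᵀ)^{-1/2}(I + P·HᵀH)(I + P·g gᵀ)^{-1/2} and let q_a be a unit vector with (I + P·g gᵀ)⁻¹(I + P·HᵀH) q_a = λ₁ q_a. Let q⊥ be a unit vector with q_aᵀ q⊥ = 0, assume (q⊥)ᵀ(HᵀH − g gᵀ)⁻¹ q⊥ < 0, and set θ = −1 / ((q⊥)ᵀ(HᵀH − g gᵀ)⁻¹ q⊥) > 0. Then the eigenvalues of the symmetric matrix M = (I + P·g gᵀ)^{-1/2}(I + P·HᵀH + P·θ·q⊥(q⊥)ᵀ)(I + P·g gᵀ)^{-1/2} are exactly λ₁ and 1; in particular, since λ₁ > 1, the largest eigenvalue of M equals λ₁, and hence sup over nonzero q ∈ ℝ² of (qᵀ(I + P·HᵀH + P·θ·q⊥(q⊥)ᵀ)q)/(qᵀ(I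 + P·g gᵀ)q) equals λ₁. -/
open Matrix

/-!
Write `S = HᵀH`, `T = g gᵀ`, `K = S - T`, `B = 1 + P T`, `A = 1 + P S = B + P K` and
`C = A + P θ q⊥ q⊥ᵀ`. Through `v = R u`, the eigenvectors `v` of `R⁻¹ C R⁻¹` correspond to the
solutions of the pencil `C u = μ B u`.

Two solutions of the pencil are explicit. Since `q_a ⊥ q⊥`, the rank-one term does not see `q_a`,
hence `C q_a = A q_a = λ₁ B q_a`. With `w = K⁻¹ q⊥`, the value of `θ` is the one for which
`(K + θ q⊥ q⊥ᵀ) w = 0`, hence `C w = B w`. As `q⊥ · w ≠ 0`, `q_a` and `w` span the plane, so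
there are no other eigenvalues.

For `1 < λ₁`: by the matrix determinant lemma the hypothesis on `g` says `det K < 0`. The vectors
`w` and `q_a` are `K`-orthogonal and `w · K w = q⊥ · w < 0`, so `q_a · K q_a > 0`, while
`P K q_a = (λ₁ - 1) B q_a` with `B` positive definite.
-/

section CommRing

variable {n α : Type*} [Fintype n] [CommRing α]

lemma dotProduct_mulVec_of_isSymm {K : Matrix n n α} (hK : K.IsSymm) (x y : n → α) :
    x ⬝ᵥ K *ᵥ y = K *ᵥ x ⬝ᵥ y := by
  rw [dotProduct_mulVec, ← mulVec_transpose, hK.eq]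

lemma conj_inv_mulVec [DecidableEq n] {R C : Matrix n n α} (hR : IsUnit R.det) (u : n → α) :
    (R⁻¹ * C * R⁻¹) *ᵥ R *ᵥ u = R⁻¹ *ᵥ C *ᵥ u := by
  rw [mulVec_mulVec, nonsing_inv_mul_cancel_right _ _ hR, mulVec_mulVec]

lemma mulVec_eq_smul_mulVec_of_inv_mul [DecidableEq n] {A B : Matrix n n α} {u : n → α} {μ : α}
    (hB : IsUnit B.det) (h : (B⁻¹ * A) *ᵥ u = μ • u) : A *ᵥ u = μ • B *ᵥ u := by
  rw [← mulVec_smul, ← h, mulVec_mulVec, mul_nonsing_inv_cancel_left _ _ hB]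

lemma add_smul_vecMulVec_mulVec (A : Matrix n n α) (c : α) (p u : n → α) :
    (A + c • vecMulVec p p) *ᵥ u = A *ᵥ u + (c * p ⬝ᵥ u) • p := by
  rw [add_mulVec, smul_mulVec, vecMulVec_mulVec, op_smul_eq_smul, smul_smul]

lemma add_smul_vecMulVec_mulVec_eq_of_sub_mulVec {A B : Matrix n n α} {c r : α} {p u : n → α}
    (h : (A - B) *ᵥ u = r • p) (hc : c * p ⬝ᵥ u = -r) :
    (A + c • vecMulVec p p) *ᵥ u = B *ᵥ u := by
  rw [add_smul_vecMulVec_mulVec, hc, neg_smul, ← h, sub_mulVec, neg_sub, add_sub_cancel]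

lemma det_sub_vecMulVec [DecidableEq n] {S : Matrix n n α} (hS : IsUnit S.det) (u v : n → α) :
    (S - vecMulVec u v).det = S.det * (1 - v ⬝ᵥ S⁻¹ *ᵥ u) := by
  have h := det_add_replicateCol_mul_replicateRow (ι := Unit) hS (-u) v
  rw [← vecMulVec_eq, neg_vecMulVec, ← sub_eq_add_neg, Matrix.mul_assoc, ← replicateCol_mulVec,
    det_unique (n := Unit), mulVec_neg] at h
  rw [h, sub_eq_add_neg, ← dotProduct_neg]
  rfl

lemma gram_det_fin_two (K : Matrix (Fin 2) (Fin 2) α) (x y : Fin 2 → α) :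
    (x ⬝ᵥ K *ᵥ x) * (y ⬝ᵥ K *ᵥ y) - (x ⬝ᵥ K *ᵥ y) * (y ⬝ᵥ K *ᵥ x) =
      K.det * (of ![x, y]).det ^ 2 := by
  simp only [det_fin_two, mulVec, dotProduct, Fin.sum_univ_two, of_apply, cons_val_zero,
    cons_val_one]
  ring

end CommRing

section Field

variable {n 𝕜 : Type*} [Fintype n] [Field 𝕜]

lemma linearIndependent_pair_of_dotProduct {p a w : n → 𝕜} (ha : a ≠ 0) (hpa : p ⬝ᵥ a = 0)
    (hpw : p ⬝ᵥ w ≠ 0) : LinearIndependent 𝕜 ![a, w] := by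
  rw [LinearIndependent.pair_iff]
  intro s t hst
  have ht : t = 0 := by
    have h := congrArg (p ⬝ᵥ ·) hst
    simpa [hpa, hpw] using h
  subst ht
  simpa [ha] using hst

lemma setOf_eigenvalue_eq_range {M : Matrix n n 𝕜} {b : n → n → 𝕜} {d : n → 𝕜}
    (hb : LinearIndependent 𝕜 b) (h : ∀ i, M *ᵥ b i = d i • b i) :
    {μ : 𝕜 | ∃ v : n → 𝕜, v ≠ 0 ∧ M *ᵥ v = μ • v} = Set.range d := by
  classical
  let e := basisOfPiSpaceOfLinearIndependent hb
  have hM : toLin' M = toLin e e (diagonal d) := e.ext fun i => by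
    have hdiag := (hasEigenvector_toLin_diagonal d i e).apply_eq_smul
    rw [hdiag, toLin'_apply, coe_basisOfPiSpaceOfLinearIndependent, h]
  ext μ
  rw [Set.mem_range, ← hasEigenvalue_toLin_diagonal_iff d e, ← hM]
  constructor
  · rintro ⟨v, hv, hMv⟩
    exact Module.End.hasEigenvalue_of_hasEigenvector ⟨Module.End.mem_eigenspace_iff.mpr hMv, hv⟩
  · intro hμ
    obtain ⟨v, hMv, hv⟩ := hμ.exists_hasEigenvector
    exact ⟨v, hv, Module.End.mem_eigenspace_iff.mp hMv⟩

lemma setOf_eigenvalue_conj_inv_eq_pair {R C : Matrix (Fin 2) (Fin 2) 𝕜} {x y : Fin 2 → 𝕜}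
    {l m : 𝕜} (hR : IsUnit R.det) (hxy : LinearIndependent 𝕜 ![x, y])
    (hx : C *ᵥ x = l • (R * R) *ᵥ x) (hy : C *ᵥ y = m • (R * R) *ᵥ y) :
    {μ : 𝕜 | ∃ v : Fin 2 → 𝕜, v ≠ 0 ∧ (R⁻¹ * C * R⁻¹) *ᵥ v = μ • v} = {l, m} := by
  have hinj : Function.Injective R.mulVec :=
    mulVec_injective_of_isUnit ((isUnit_iff_isUnit_det R).mpr hR)
  have heig {u : Fin 2 → 𝕜} {μ : 𝕜} (hu : C *ᵥ u = μ • (R * R) *ᵥ u) :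
      (R⁻¹ * C * R⁻¹) *ᵥ R *ᵥ u = μ • R *ᵥ u := by
    rw [conj_inv_mulVec hR, hu, mulVec_smul, mulVec_mulVec, nonsing_inv_mul_cancel_left _ _ hR]
  have hind : LinearIndependent 𝕜 (R.mulVecLin ∘ ![x, y]) :=
    hxy.map' _ (LinearMap.ker_eq_bot.mpr hinj)
  rw [setOf_eigenvalue_eq_range (d := ![l, m]) hind, range_cons_cons_empty]
  rintro (i : Fin 2)
  fin_cases i
  exacts [heig hx, heig hy]

variable [LinearOrder 𝕜] [IsStrictOrderedRing 𝕜]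

lemma dotProduct_mulVec_pos_of_det_neg {K : Matrix (Fin 2) (Fin 2) 𝕜} {x y : Fin 2 → 𝕜}
    (hK : K.det < 0) (hxy : LinearIndependent 𝕜 ![x, y]) (horth : y ⬝ᵥ K *ᵥ x = 0)
    (hy : y ⬝ᵥ K *ᵥ y < 0) : 0 < x ⬝ᵥ K *ᵥ x := by
  have hdet : (of ![x, y]).det ≠ 0 :=
    ((isUnit_iff_isUnit_det _).mp (linearIndependent_rows_iff_isUnit.mp hxy)).ne_zero
  have hgram := gram_det_fin_two K x y
  rw [horth, mul_zero, sub_zero] at hgram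
  exact pos_of_mul_neg_left (hgram ▸ mul_neg_of_neg_of_pos hK (sq_pos_of_ne_zero hdet)) hy.le

lemma det_transpose_mul_self_sub_vecMulVec_neg [DecidableEq n] {H : Matrix n n 𝕜} {g : n → 𝕜}
    (hH : IsUnit H.det) (hg : 1 < g ⬝ᵥ (Hᵀ * H)⁻¹ *ᵥ g) :
    (Hᵀ * H - vecMulVec g g).det < 0 := by
  have hpos : 0 < (Hᵀ * H).det := by
    rw [det_mul, det_transpose]
    exact mul_self_pos.mpr hH.ne_zero
  rw [det_sub_vecMulVec hpos.ne'.isUnit]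
  exact mul_neg_of_pos_of_neg hpos (sub_neg.mpr hg)

end Field

section Real

variable {n : Type*} [Fintype n]

lemma posDef_mul_self {R : Matrix n n ℝ} (hR : R.PosDef) : (R * R).PosDef := by
  classical
  simpa only [hR.isHermitian.eq] using
    PosDef.conjTranspose_mul_self R (mulVec_injective_of_det_ne_zero hR.det_pos.ne')

lemma posSemidef_smul_one_sub_of_mem_upperBounds [DecidableEq n] {M : Matrix n n ℝ} {l : ℝ}
    (hM : M.IsHermitian)
    (hl : l ∈ upperBounds {μ : ℝ | ∃ v : n → ℝ, v ≠ 0 ∧ M *ᵥ v = μ • v}) :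
    (l • 1 - M).PosSemidef := by
  have hN : (l • 1 - M).IsHermitian := (isHermitian_one.smul (.all l)).sub hM
  rw [hN.posSemidef_iff_eigenvalues_nonneg]
  intro i
  set v : n → ℝ := ⇑(hN.eigenvectorBasis i) with hv
  have hv0 : v ≠ 0 := fun h =>
    hN.eigenvectorBasis.orthonormal.ne_zero i (by ext j; exact congrFun h j)
  have hMv : M *ᵥ v = (l - hN.eigenvalues i) • v := by
    rw [sub_smul, hv, ← hN.mulVec_eigenvectorBasis, sub_mulVec, smul_mulVec, one_mulVec,
      sub_sub_cancel]
  simpa using hl ⟨v, hv0, hMv⟩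

lemma isGreatest_rayleigh_of_isGreatest_eigenvalue [DecidableEq n] {R C : Matrix n n ℝ} {l : ℝ}
    (hR : R.IsSymm) (hRu : IsUnit R.det) (hC : C.IsSymm)
    (hl : IsGreatest {μ : ℝ | ∃ v : n → ℝ, v ≠ 0 ∧ (R⁻¹ * C * R⁻¹) *ᵥ v = μ • v} l) :
    IsGreatest {r : ℝ | ∃ q : n → ℝ, q ≠ 0 ∧ r = (q ⬝ᵥ C *ᵥ q) / (q ⬝ᵥ (R * R) *ᵥ q)} l := by
  have hM : (R⁻¹ * C * R⁻¹).IsHermitian := by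
    rw [IsHermitian, conjTranspose_eq_transpose_of_trivial, transpose_mul, transpose_mul,
      transpose_nonsing_inv, hR.eq, hC.eq, mul_assoc]
  have hB (q : n → ℝ) : q ⬝ᵥ (R * R) *ᵥ q = R *ᵥ q ⬝ᵥ R *ᵥ q := by
    rw [← mulVec_mulVec, dotProduct_mulVec_of_isSymm hR]
  have hCq (q : n → ℝ) : q ⬝ᵥ C *ᵥ q = R *ᵥ q ⬝ᵥ (R⁻¹ * C * R⁻¹) *ᵥ R *ᵥ q := by
    rw [conj_inv_mulVec hRu, ← dotProduct_mulVec_of_isSymm hR, mulVec_mulVec,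
      mul_nonsing_inv _ hRu, one_mulVec]
  have hpos {v : n → ℝ} (hv : v ≠ 0) : 0 < v ⬝ᵥ v := by
    simpa using dotProduct_star_self_pos_iff.mpr hv
  constructor
  · obtain ⟨v, hv, hMv⟩ := hl.1
    have hRv : R *ᵥ R⁻¹ *ᵥ v = v := by rw [mulVec_mulVec, mul_nonsing_inv _ hRu, one_mulVec]
    refine ⟨R⁻¹ *ᵥ v, fun h => hv (by rw [← hRv, h, mulVec_zero]), ?_⟩
    rw [hCq, hB, hRv, hMv, dotProduct_smul, smul_eq_mul, mul_div_cancel_right₀ _ (hpos hv).ne']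
  · rintro _ ⟨q, hq, rfl⟩
    have hRq : R *ᵥ q ≠ 0 :=
      fun h => hq (mulVec_injective_of_det_ne_zero hRu.ne_zero (by rw [h, mulVec_zero]))
    rw [hCq, hB, div_le_iff₀ (hpos hRq), ← sub_nonneg]
    have h := (posSemidef_smul_one_sub_of_mem_upperBounds hM hl.2).dotProduct_mulVec_nonneg (R *ᵥ q)
    simpa only [star_trivial, sub_mulVec, smul_mulVec, one_mulVec, dotProduct_sub,
      dotProduct_smul, smul_eq_mul] using h

lemma one_lt_of_mulVec_eq_smul_mulVec {A B : Matrix n n ℝ} {u : n → ℝ} {l : ℝ} (hB : B.PosDef)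
    (hu : u ≠ 0) (h : A *ᵥ u = l • B *ᵥ u) (hpos : 0 < u ⬝ᵥ (A - B) *ᵥ u) : 1 < l := by
  have hBu : 0 < u ⬝ᵥ B *ᵥ u := hB.dotProduct_mulVec_pos hu
  rw [sub_mulVec, h, dotProduct_sub, dotProduct_smul, smul_eq_mul, ← sub_one_mul] at hpos
  exact sub_pos.mp (pos_of_mul_pos_left hpos hBu.le)

lemma one_lt_of_det_sub_neg {A B : Matrix (Fin 2) (Fin 2) ℝ} {a p w : Fin 2 → ℝ} {l r : ℝ}
    (hB : B.PosDef) (hsymm : (A - B).IsSymm) (hdet : (A - B).det < 0) (ha : a ≠ 0)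
    (hAa : A *ᵥ a = l • B *ᵥ a) (hpa : p ⬝ᵥ a = 0) (hw : (A - B) *ᵥ w = r • p) (hr : 0 < r)
    (hpw : p ⬝ᵥ w < 0) : 1 < l := by
  have horth : w ⬝ᵥ (A - B) *ᵥ a = 0 := by
    rw [dotProduct_mulVec_of_isSymm hsymm, hw, smul_dotProduct, hpa, smul_zero]
  have hneg : w ⬝ᵥ (A - B) *ᵥ w < 0 := by
    rw [hw, dotProduct_smul, dotProduct_comm]
    exact smul_neg_of_pos_of_neg hr hpw
  have hind : LinearIndependent ℝ ![a, w] := linearIndependent_pair_of_dotProduct ha hpa hpw.ne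
  exact one_lt_of_mulVec_eq_smul_mulVec hB ha hAa
    (dotProduct_mulVec_pos_of_det_neg hdet hind horth hneg)

end Real

theorem stmt11_general {S T R : Matrix (Fin 2) (Fin 2) ℝ} {qa qp : Fin 2 → ℝ} {P lam1 : ℝ}
    (hS : S.IsSymm) (hT : T.IsSymm) (hdet : (S - T).det < 0) (hP : 0 < P)
    (hR : R.PosDef) (hRB : R * R = 1 + P • T) (hqa : qa ≠ 0)
    (hqae : ((1 + P • T)⁻¹ * (1 + P • S)) *ᵥ qa = lam1 • qa) (horth : qa ⬝ᵥ qp = 0)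
    (hneg : qp ⬝ᵥ (S - T)⁻¹ *ᵥ qp < 0) :
    let θ : ℝ := -1 / (qp ⬝ᵥ (S - T)⁻¹ *ᵥ qp)
    let C : Matrix (Fin 2) (Fin 2) ℝ := 1 + P • S + (P * θ) • vecMulVec qp qp
    let eigenvalues : Set ℝ := {μ : ℝ | ∃ v : Fin 2 → ℝ, v ≠ 0 ∧ (R⁻¹ * C * R⁻¹) *ᵥ v = μ • v}
    0 < θ
    ∧ eigenvalues = {lam1, 1}
    ∧ 1 < lam1
    ∧ IsGreatest eigenvalues lam1
    ∧ IsGreatest {r : ℝ | ∃ q : Fin 2 → ℝ, q ≠ 0 ∧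
        r = (q ⬝ᵥ C *ᵥ q) / (q ⬝ᵥ (1 + P • T) *ᵥ q)} lam1 := by
  intro θ C eigenvalues
  set K := S - T with hK
  set w := K⁻¹ *ᵥ qp with hw
  have hRu : IsUnit R.det := hR.det_pos.ne'.isUnit
  have hB : (R * R).PosDef := posDef_mul_self hR
  have hAB : 1 + P • S - R * R = P • K := by rw [hRB, hK, smul_sub, add_sub_add_left_eq_sub]
  have hABw : (1 + P • S - R * R) *ᵥ w = P • qp := by
    rw [hAB, smul_mulVec, hw, mulVec_mulVec, mul_nonsing_inv _ hdet.ne.isUnit, one_mulVec]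
  rw [dotProduct_comm] at horth
  rw [← hRB] at hqae ⊢
  have hAqa : (1 + P • S) *ᵥ qa = lam1 • (R * R) *ᵥ qa :=
    mulVec_eq_smul_mulVec_of_inv_mul hB.det_pos.ne'.isUnit hqae
  have hCqa : C *ᵥ qa = lam1 • (R * R) *ᵥ qa := by
    rw [add_smul_vecMulVec_mulVec, hAqa, horth, mul_zero, zero_smul, add_zero]
  have hCw : C *ᵥ w = (1 : ℝ) • (R * R) *ᵥ w := by
    rw [one_smul]
    exact add_smul_vecMulVec_mulVec_eq_of_sub_mulVec hABw
      (by rw [mul_assoc, div_mul_cancel₀ _ hneg.ne, mul_neg_one])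
  have hlam1 : 1 < lam1 :=
    one_lt_of_det_sub_neg hB (hAB ▸ (hS.sub hT).smul P)
      (by rw [hAB, det_smul]; exact mul_neg_of_pos_of_neg (by positivity) hdet)
      hqa hAqa horth hABw hP hneg
  have heig : eigenvalues = {lam1, 1} :=
    setOf_eigenvalue_conj_inv_eq_pair hRu
      (linearIndependent_pair_of_dotProduct hqa horth hneg.ne) hCqa hCw
  have hgreatest : IsGreatest eigenvalues lam1 := by
    rw [heig]
    simpa only [sup_eq_left.mpr hlam1.le] using isGreatest_pair (a := lam1) (b := 1)
  have hC : C.IsSymm :=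
    (isSymm_one.add (hS.smul P)).add (.smul (transpose_vecMulVec qp qp) (P * θ))
  exact ⟨div_pos_of_neg_of_neg neg_one_lt_zero hneg, heig, hlam1, hgreatest,
    isGreatest_rayleigh_of_isGreatest_eigenvalue hR.isHermitian hRu hC hgreatest⟩

/-- Let `H` be invertible 2×2, `g` with `gᵀ(HᵀH)⁻¹g > 1`, `P > 0`, let `R` be the
symmetric positive definite square root of `B = I + P g gᵀ`, and let `λ₁` be the
largest eigenvalue of `R⁻¹(I + P HᵀH)R⁻¹` with `B⁻¹(I + P HᵀH) q_a = λ₁ q_a` for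
a unit vector `q_a`. Let `q⊥` be a unit vector orthogonal to `q_a` with
`(q⊥)ᵀ(HᵀH − g gᵀ)⁻¹q⊥ < 0`, and `θ = −1/((q⊥)ᵀ(HᵀH − g gᵀ)⁻¹q⊥) > 0`. Then the
eigenvalues of `M = R⁻¹(I + P HᵀH + P θ q⊥(q⊥)ᵀ)R⁻¹` are exactly `λ₁` and `1`;
since `λ₁ > 1`, the largest eigenvalue of `M` is `λ₁`, and the supremum over
nonzero `q` of the Rayleigh quotient
`(qᵀ(I + P HᵀH + P θ q⊥(q⊥)ᵀ)q)/(qᵀ(I + P g gᵀ)q)` equals (and is attained at) `λ₁`. -/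
theorem stmt11 (H R : Matrix (Fin 2) (Fin 2) ℝ) (g qa qp : Fin 2 → ℝ) (P lam1 : ℝ)
    (hH : IsUnit H.det) (hg : 1 < g ⬝ᵥ (Hᵀ * H)⁻¹.mulVec g) (hP : 0 < P)
    (hR : R.PosDef) (hRB : R * R = 1 + P • vecMulVec g g)
    (hlam : IsGreatest {μ : ℝ | ∃ v : Fin 2 → ℝ, v ≠ 0 ∧
      (R⁻¹ * (1 + P • (Hᵀ * H)) * R⁻¹).mulVec v = μ • v} lam1)
    (hqa : qa ⬝ᵥ qa = 1)
    (hqae : ((1 + P • vecMulVec g g)⁻¹ * (1 + P • (Hᵀ * H))).mulVec qa = lam1 • qa)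
    (hqp : qp ⬝ᵥ qp = 1) (horth : qa ⬝ᵥ qp = 0)
    (hneg : qp ⬝ᵥ (Hᵀ * H - vecMulVec g g)⁻¹.mulVec qp < 0) :
    let θ : ℝ := -1 / (qp ⬝ᵥ (Hᵀ * H - vecMulVec g g)⁻¹.mulVec qp)
    let M : Matrix (Fin 2) (Fin 2) ℝ :=
      R⁻¹ * (1 + P • (Hᵀ * H) + (P * θ) • vecMulVec qp qp) * R⁻¹
    0 < θ
    ∧ {μ : ℝ | ∃ v : Fin 2 → ℝ, v ≠ 0 ∧ M.mulVec v = μ • v} = {lam1, 1}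
    ∧ 1 < lam1
    ∧ IsGreatest {μ : ℝ | ∃ v : Fin 2 → ℝ, v ≠ 0 ∧ M.mulVec v = μ • v} lam1
    ∧ IsGreatest {r : ℝ | ∃ q : Fin 2 → ℝ, q ≠ 0 ∧
        r = (q ⬝ᵥ (1 + P • (Hᵀ * H) + (P * θ) • vecMulVec qp qp).mulVec q)
          / (q ⬝ᵥ (1 + P • vecMulVec g g).mulVec q)} lam1 :=
  stmt11_general (isSymm_transpose_mul_self H) (transpose_vecMulVec g g)
    (det_transpose_mul_self_sub_vecMulVec_neg hH hg) hP hR hRB (by rintro rfl; simp at hqa)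
    hqae horth hneg
end

section
/- Let H be an invertible 2×2 real matrix, g ∈ ℝ² with gᵀ(HᵀH)⁻¹g > 1, and P > 0. Let λ₁ be the largest eigenvalue of (I + P·g gᵀ)^{-1/2}(I + P·HᵀH)(I + P·g gᵀ)^{-1/2}, let q_a be a unit vector with (I + P·g gᵀ)⁻¹(I + P·HᵀH) q_a = λ₁ q_a, and let q⊥ be a unit vector with q_aᵀ q⊥ = 0. Assume gᵀ(HᵀH)⁻¹q⊥ ≠ 0, define α* by 1/α* = gᵀ(HᵀH)⁻¹q⊥ / (1 − gᵀ(HᵀH)⁻¹g) and a* = H^{-T}(α* q⊥ + g), so that ‖a*‖ < 1. With N* = [[I, a*],[a*ᵀ, 1]] and H̄ = [H; gᵀ], define U(S) = (1/2)·log( det(I + (N*)⁻¹ H̄ S H̄ᵀ) / (1 + gᵀSg) ). Then the maximum of U(S) over all 2×2 positive semidefinite matrices S with tr(S) ≤ P equals (1/2)·log λ₁; consequently this upper bound coincides with the maximum of (1/2)·log det(I + H S Hᵀ) − (1/2)·log(1 + gᵀSg) over the same set, and both equal (1/2)·log λ₁. -/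
open Matrix

/-!
Let `E = HᵀH - ggᵀ`. The hypothesis on `g` says `det E < 0`, so `E` is indefinite; hence `λ₁ > 1`,
and the eigenvector equation reads `P E q = (λ₁ - 1) (q + P (gᵀq) g)`, so that `qᵀEq > 0`. The
correlation `a* = H x` is chosen so that `gᵀx = 1` and `Ex` is a multiple of `q⊥`, that is, `x` is
`E`-orthogonal to `q`. Therefore `xᵀEx < 0`, which is `‖a*‖² = 1 + xᵀEx < 1`, and `E` splits as the
sum of `(qᵀEq)⁻¹ (Eq)(Eq)ᵀ` and `(xᵀEx)⁻¹ (Ex)(Ex)ᵀ`. The optimal correlation removes exactly the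
negative summand: `H̄ᵀ N⁻¹ H̄ = ggᵀ + (qᵀEq)⁻¹ (Eq)(Eq)ᵀ`. For such a rank-two Gram matrix,
completing a square bounds `det (I + S H̄ᵀ N⁻¹ H̄)` by `λ₁ (1 + gᵀSg)`. Beamforming along `q`
attains this bound, and since `qᵀEx = 0` it does so even without the eavesdropper's signal.
-/

section RankOne

variable {n : Type*}

lemma isSymm_vecMulVec_self {R : Type*} [CommRing R] (v : n → R) : (vecMulVec v v).IsSymm := by
  ext i j
  simp only [transpose_apply, vecMulVec_apply, mul_comm]

variable [Fintype n]

lemma dotProduct_vecMulVec_mulVec {R : Type*} [CommRing R] (u v p w : n → R) :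
    p ⬝ᵥ vecMulVec u v *ᵥ w = (p ⬝ᵥ u) * (v ⬝ᵥ w) := by
  rw [vecMulVec_mulVec, op_smul_eq_smul, dotProduct_smul, smul_eq_mul, mul_comm]

lemma dotProduct_mulVec_comm {R : Type*} [CommRing R] {A : Matrix n n R} (hA : A.IsSymm)
    (u v : n → R) : u ⬝ᵥ A *ᵥ v = v ⬝ᵥ A *ᵥ u := by
  rw [← dotProduct_transpose_mulVec, hA.eq]

variable [DecidableEq n]

lemma det_add_vecMulVec {R : Type*} [CommRing R] {A : Matrix n n R} (hA : IsUnit A.det)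
    (u v : n → R) : (A + vecMulVec u v).det = A.det * (1 + v ⬝ᵥ A⁻¹ *ᵥ u) := by
  rw [vecMulVec_eq Unit, det_add_replicateCol_mul_replicateRow hA, Matrix.mul_assoc,
    ← replicateCol_mulVec, det_unique (n := Unit), Matrix.add_apply, one_apply_eq,
    replicateRow_mul_replicateCol_apply]

lemma det_one_add_smul_vecMulVec_mul {R : Type*} [CommRing R] (M : Matrix n n R) (c : R)
    (q : n → R) : (1 + c • vecMulVec q q * M).det = 1 + c * (q ⬝ᵥ M *ᵥ q) := by
  rw [← smul_vecMulVec, vecMulVec_mul, det_add_vecMulVec (by simp), det_one, one_mul, inv_one,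
    one_mulVec, dotProduct_smul, smul_eq_mul, dotProduct_mulVec]

lemma det_one_add_mul_rankTwo {R : Type*} [CommRing R] {S : Matrix n n R} (hS : S.IsSymm)
    (g p : n → R) (t : R) :
    (1 + S * (vecMulVec g g + t • vecMulVec p p)).det =
      (1 + g ⬝ᵥ S *ᵥ g) * (1 + t * (p ⬝ᵥ S *ᵥ p)) - t * (p ⬝ᵥ S *ᵥ g) ^ 2 := by
  set V : Matrix (Fin 2) n R := of ![g, p]
  set W : Matrix (Fin 2) n R := of ![g, t • p]
  have hVW : vecMulVec g g + t • vecMulVec p p = Vᵀ * W := by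
    ext i j
    simp only [Matrix.add_apply, Matrix.smul_apply, vecMulVec_apply, mul_apply, Fin.sum_univ_two,
      V, W, transpose_apply, of_apply, cons_val_zero, cons_val_one, Pi.smul_apply, smul_eq_mul]
    ring
  have hentry (i j : Fin 2) :
      (W * (S * Vᵀ)) i j = (![g, t • p] i : n → R) ⬝ᵥ S *ᵥ (![g, p] j : n → R) := rfl
  rw [hVW, ← Matrix.mul_assoc, det_one_add_mul_comm, det_fin_two]
  simp only [Matrix.add_apply, hentry, cons_val_zero, cons_val_one, one_apply_eq,
    smul_dotProduct, smul_eq_mul, one_apply_ne zero_ne_one, one_apply_ne one_ne_zero,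
    dotProduct_mulVec_comm hS g p]
  ring

-- Completing the square: the two sides differ by `t * (s - qᵀSg) ^ 2`.
lemma det_one_add_mul_rankTwo_le {S : Matrix n n ℝ} (hS : S.IsSymm) {t : ℝ} (ht : 0 ≤ t)
    (g q : n → ℝ) (s : ℝ) :
    (1 + S * (vecMulVec g g + t • vecMulVec (q + s • g) (q + s • g))).det ≤
      (1 + g ⬝ᵥ S *ᵥ g) * (1 + t * (q ⬝ᵥ S *ᵥ q + s ^ 2)) := by
  rw [det_one_add_mul_rankTwo hS]
  simp only [mulVec_add, mulVec_smul, add_dotProduct, smul_dotProduct, dotProduct_add,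
    dotProduct_smul, smul_eq_mul, dotProduct_mulVec_comm hS g q]
  linarith [mul_nonneg ht (sq_nonneg (s - q ⬝ᵥ S *ᵥ g))]

end RankOne

section PosSemidef

variable {n : Type*}

lemma isSymm_of_posSemidef {S : Matrix n n ℝ} (hS : S.PosSemidef) : S.IsSymm := by
  rw [IsSymm, ← conjTranspose_eq_transpose_of_trivial, hS.isHermitian.eq]

lemma posSemidef_smul_vecMulVec_self [Finite n] {t : ℝ} (ht : 0 ≤ t) (v : n → ℝ) :
    (t • vecMulVec v v).PosSemidef := by
  simpa only [star_trivial] using (posSemidef_vecMulVec_self_star v).smul ht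

lemma posSemidef_transpose_mul_self {m : Type*} [Fintype m] [Finite n] (L : Matrix m n ℝ) :
    (Lᵀ * L).PosSemidef := by
  simpa only [conjTranspose_eq_transpose_of_trivial] using posSemidef_conjTranspose_mul_self L

variable [Fintype n]

lemma one_add_dotProduct_mulVec_pos {S : Matrix n n ℝ} (hS : S.PosSemidef) (g : n → ℝ) :
    0 < 1 + g ⬝ᵥ S *ᵥ g := by
  have := hS.dotProduct_mulVec_nonneg g
  rw [star_trivial] at this
  positivity

lemma dotProduct_mulVec_le_trace_mul {S : Matrix n n ℝ} (hS : S.PosSemidef) (q : n → ℝ) :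
    q ⬝ᵥ S *ᵥ q ≤ S.trace * (q ⬝ᵥ q) := by
  obtain ⟨k, v, rfl⟩ := posSemidef_iff_eq_sum_vecMulVec.mp hS
  simp only [star_trivial, sum_mulVec, dotProduct_sum, trace_sum, trace_vecMulVec,
    dotProduct_vecMulVec_mulVec, Finset.sum_mul]
  refine Finset.sum_le_sum fun i _ => ?_
  rw [dotProduct_comm q, ← sq]
  simpa only [dotProduct, ← sq] using Finset.sum_mul_sq_le_sq_mul_sq Finset.univ (v i) q

open scoped MatrixOrder in
lemma exists_eq_transpose_mul_self {S : Matrix n n ℝ} (hS : S.PosSemidef) :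
    ∃ L : Matrix n n ℝ, S = Lᵀ * L := by
  classical
  obtain ⟨L, hL⟩ := CStarAlgebra.nonneg_iff_eq_star_mul_self.mp hS.nonneg
  exact ⟨L, by rw [hL, star_eq_conjTranspose, conjTranspose_eq_transpose_of_trivial]⟩

variable [DecidableEq n]

lemma det_le_det_add {X Y : Matrix n n ℝ} (hX : X.PosDef) (hY : Y.PosSemidef) :
    X.det ≤ (X + Y).det := by
  obtain ⟨k, v, rfl⟩ := posSemidef_iff_eq_sum_vecMulVec.mp hY
  clear hY
  induction k generalizing X with
  | zero => simp
  | succ k ih =>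
    rw [Fin.sum_univ_succ, ← add_assoc]
    refine le_trans ?_ (ih (hX.add_posSemidef (posSemidef_vecMulVec_self_star (v 0))) _)
    rw [det_add_vecMulVec hX.det_pos.ne'.isUnit]
    exact le_mul_of_one_le_right hX.det_pos.le
      (le_add_of_nonneg_right (hX.inv.posSemidef.dotProduct_mulVec_nonneg (v 0)))

lemma posDef_one_add_mul_mul_transpose {A : Matrix n n ℝ} (hA : A.PosSemidef) (L : Matrix n n ℝ) :
    (1 + L * A * Lᵀ).PosDef := by
  rw [← conjTranspose_eq_transpose_of_trivial]
  exact PosDef.one.add_posSemidef (hA.mul_mul_conjTranspose_same L)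

lemma det_one_add_transpose_mul_self_mul {m R : Type*} [Fintype m] [DecidableEq m] [CommRing R]
    (L : Matrix m n R) (A : Matrix n n R) : (1 + Lᵀ * L * A).det = (1 + L * A * Lᵀ).det := by
  rw [Matrix.mul_assoc, det_one_add_mul_comm]

lemma det_one_add_mul_pos {S A : Matrix n n ℝ} (hS : S.PosSemidef) (hA : A.PosSemidef) :
    0 < (1 + S * A).det := by
  obtain ⟨L, rfl⟩ := exists_eq_transpose_mul_self hS
  rw [det_one_add_transpose_mul_self_mul]
  exact (posDef_one_add_mul_mul_transpose hA L).det_pos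

lemma det_one_add_mul_le_det_one_add_mul {S A B : Matrix n n ℝ} (hS : S.PosSemidef)
    (hA : A.PosSemidef) (hAB : (B - A).PosSemidef) : (1 + S * A).det ≤ (1 + S * B).det := by
  obtain ⟨L, rfl⟩ := exists_eq_transpose_mul_self hS
  have hLAB : (L * (B - A) * Lᵀ).PosSemidef := by
    simpa only [conjTranspose_eq_transpose_of_trivial] using hAB.mul_mul_conjTranspose_same L
  have hsplit : 1 + L * B * Lᵀ = 1 + L * A * Lᵀ + L * (B - A) * Lᵀ := by
    rw [add_assoc, ← Matrix.add_mul, ← Matrix.mul_add, add_sub_cancel]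
  rw [det_one_add_transpose_mul_self_mul, det_one_add_transpose_mul_self_mul, hsplit]
  exact det_le_det_add (posDef_one_add_mul_mul_transpose hA L) hLAB

lemma exists_dotProduct_mulVec_pos_of_det_neg (hn : Even (Fintype.card n)) {E : Matrix n n ℝ}
    (hE : E.IsSymm) (hdet : E.det < 0) : ∃ v, 0 < v ⬝ᵥ E *ᵥ v := by
  by_contra! hle
  have hneg : (-E).PosSemidef := by
    refine .of_dotProduct_mulVec_nonneg ?_ fun v => ?_
    · rw [IsHermitian, conjTranspose_eq_transpose_of_trivial, transpose_neg, hE.eq]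
    · simpa only [star_trivial, neg_mulVec, dotProduct_neg, neg_nonneg] using hle v
  have := hneg.det_nonneg
  rw [det_neg, hn.neg_one_pow, one_mul] at this
  exact this.not_gt hdet

end PosSemidef

section LargestEigenvalue

variable {n : Type*} [Fintype n] [DecidableEq n]

lemma posSemidef_smul_one_sub {T : Matrix n n ℝ} (hT : T.IsHermitian) {l : ℝ}
    (hl : l ∈ upperBounds {μ : ℝ | ∃ v : n → ℝ, v ≠ 0 ∧ T *ᵥ v = μ • v}) :
    (l • (1 : Matrix n n ℝ) - T).PosSemidef := by
  have hherm : (l • (1 : Matrix n n ℝ) - T).IsHermitian :=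
    (isHermitian_one.smul (IsSelfAdjoint.all l)).sub hT
  refine hherm.posSemidef_iff_eigenvalues_nonneg.mpr fun i => ?_
  have hv := hherm.mulVec_eigenvectorBasis i
  have hv0 := hherm.eigenvectorBasis.orthonormal.ne_zero i
  set μ := hherm.eigenvalues i
  set v := hherm.eigenvectorBasis i
  have hTv : T *ᵥ v = (l - μ) • (v : n → ℝ) := by
    rw [sub_smul, ← hv, sub_mulVec, smul_mulVec, one_mulVec, sub_sub_cancel]
  have := hl ⟨v, by simpa using hv0, hTv⟩
  change 0 ≤ μ
  linarith

lemma one_lt_of_isGreatest_eigenvalue {R C : Matrix n n ℝ} (hR : R.PosDef) (hC : C.IsSymm) {l : ℝ}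
    (hl : IsGreatest {μ : ℝ | ∃ v : n → ℝ, v ≠ 0 ∧ (R⁻¹ * C * R⁻¹) *ᵥ v = μ • v} l)
    {v : n → ℝ} (hv : 0 < v ⬝ᵥ (C - R * R) *ᵥ v) : 1 < l := by
  have hRt : Rᵀ = R := isSymm_of_posSemidef hR.posSemidef
  have hRu : IsUnit R.det := hR.det_pos.ne'.isUnit
  have hT : (R⁻¹ * C * R⁻¹).IsHermitian := by
    simp only [IsHermitian, conjTranspose_eq_transpose_of_trivial, transpose_mul,
      transpose_nonsing_inv, hRt, hC.eq, Matrix.mul_assoc]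
  have hpsd : (l • (R * R) - C).PosSemidef := by
    have := (posSemidef_smul_one_sub hT hl.2).mul_mul_conjTranspose_same R
    rwa [conjTranspose_eq_transpose_of_trivial, hRt, Matrix.mul_sub, Matrix.sub_mul,
      mul_smul_comm, Matrix.mul_one, smul_mul_assoc, Matrix.mul_assoc R⁻¹,
      mul_nonsing_inv_cancel_left _ _ hRu, nonsing_inv_mul_cancel_right _ _ hRu] at this
  have hlv := hpsd.dotProduct_mulVec_nonneg v
  have hRv : 0 ≤ v ⬝ᵥ (R * R) *ᵥ v := by
    simpa only [star_trivial, hRt] using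
      (posSemidef_transpose_mul_self R).dotProduct_mulVec_nonneg v
  rw [star_trivial, sub_mulVec, dotProduct_sub, smul_mulVec, dotProduct_smul, smul_eq_mul] at hlv
  rw [sub_mulVec, dotProduct_sub] at hv
  by_contra! hle
  linarith [mul_le_of_le_one_left hRv hle]

end LargestEigenvalue

section BinaryForm

variable {E : Matrix (Fin 2) (Fin 2) ℝ} {q x : Fin 2 → ℝ}

lemma dotProduct_mulVec_mul_of_orthogonal (hE : E.IsSymm) (hqx : q ⬝ᵥ E *ᵥ x = 0) :
    (q ⬝ᵥ E *ᵥ q) * (x ⬝ᵥ E *ᵥ x) = E.det * (q 0 * x 1 - q 1 * x 0) ^ 2 := by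
  have hE10 : E 1 0 = E 0 1 := hE.apply 0 1
  simp only [dotProduct, mulVec, Fin.sum_univ_two, det_fin_two, hE10] at hqx ⊢
  linear_combination (q 0 * (E 0 0 * x 0 + E 0 1 * x 1) + q 1 * (E 0 1 * x 0 + E 1 1 * x 1)) * hqx

lemma dotProduct_mulVec_neg_of_det_neg (hE : E.IsSymm) (hdet : E.det < 0)
    (hq : 0 < q ⬝ᵥ E *ᵥ q) (hx : x ≠ 0) (hqx : q ⬝ᵥ E *ᵥ x = 0) : x ⬝ᵥ E *ᵥ x < 0 := by
  have hindep : q 0 * x 1 - q 1 * x 0 ≠ 0 := by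
    intro hd
    have hcoord (i : Fin 2) : x i • q = q i • x := by
      ext j
      simp only [Pi.smul_apply, smul_eq_mul]
      fin_cases i <;> fin_cases j <;> simp only [Fin.zero_eta, Fin.mk_one] <;> linarith
    refine hx (funext fun i => ?_)
    have := congrArg (fun w => q ⬝ᵥ E *ᵥ w) (hcoord i)
    simp only [mulVec_smul, dotProduct_smul, hqx, smul_eq_mul, mul_zero] at this
    exact (mul_eq_zero.mp this).resolve_right hq.ne'
  refine neg_of_mul_neg_right ?_ hq.le
  rw [dotProduct_mulVec_mul_of_orthogonal hE hqx]
  exact mul_neg_of_neg_of_pos hdet (by positivity)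

lemma smul_eq_add_smul_vecMulVec_of_orthogonal (hE : E.IsSymm) (hqx : q ⬝ᵥ E *ᵥ x = 0) :
    ((q ⬝ᵥ E *ᵥ q) * (x ⬝ᵥ E *ᵥ x)) • E =
      (x ⬝ᵥ E *ᵥ x) • vecMulVec (E *ᵥ q) (E *ᵥ q)
        + (q ⬝ᵥ E *ᵥ q) • vecMulVec (E *ᵥ x) (E *ᵥ x) := by
  have hE10 : E 1 0 = E 0 1 := hE.apply 0 1
  ext i j
  have hpolar : (q ⬝ᵥ E *ᵥ q) * (x ⬝ᵥ E *ᵥ x) * E i j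
      - (x ⬝ᵥ E *ᵥ x) * ((E *ᵥ q) i * (E *ᵥ q) j) - (q ⬝ᵥ E *ᵥ q) * ((E *ᵥ x) i * (E *ᵥ x) j)
      = (q ⬝ᵥ E *ᵥ x) * ((q ⬝ᵥ E *ᵥ x) * E i j
        - (E *ᵥ q) i * (E *ᵥ x) j - (E *ᵥ x) i * (E *ᵥ q) j) := by
    simp only [dotProduct, mulVec, Fin.sum_univ_two]
    fin_cases i <;> fin_cases j <;> simp only [Fin.zero_eta, Fin.mk_one, hE10] <;> ring
  simp only [Matrix.add_apply, Matrix.smul_apply, vecMulVec_apply, smul_eq_mul]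
  rw [hqx, zero_mul] at hpolar
  linear_combination hpolar

lemma eq_add_smul_vecMulVec_of_orthogonal (hE : E.IsSymm) (hq : q ⬝ᵥ E *ᵥ q ≠ 0)
    (hx : x ⬝ᵥ E *ᵥ x ≠ 0) (hqx : q ⬝ᵥ E *ᵥ x = 0) :
    E = (q ⬝ᵥ E *ᵥ q)⁻¹ • vecMulVec (E *ᵥ q) (E *ᵥ q)
      + (x ⬝ᵥ E *ᵥ x)⁻¹ • vecMulVec (E *ᵥ x) (E *ᵥ x) := by
  have h := congrArg (((q ⬝ᵥ E *ᵥ q) * (x ⬝ᵥ E *ᵥ x))⁻¹ • ·)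
    (smul_eq_add_smul_vecMulVec_of_orthogonal hE hqx)
  rwa [inv_smul_smul₀ (mul_ne_zero hq hx), smul_add, smul_smul, smul_smul, mul_inv, mul_assoc,
    inv_mul_cancel₀ hx, mul_one, mul_right_comm, inv_mul_cancel₀ hq, one_mul] at h

end BinaryForm

section Pencil

variable {n R : Type*} [Fintype n] [DecidableEq n] [CommRing R]

lemma sub_mulVec_eq_of_inv_mul_mulVec_eq {B C : Matrix n n R} (hB : IsUnit B.det) {q : n → R}
    {l : R} (h : (B⁻¹ * C) *ᵥ q = l • q) : (C - B) *ᵥ q = (l - 1) • B *ᵥ q := by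
  have hC : C *ᵥ q = l • B *ᵥ q := by
    rw [← mulVec_smul, ← h, mulVec_mulVec, mul_nonsing_inv_cancel_left _ _ hB]
  rw [sub_mulVec, hC, sub_smul, one_smul]

end Pencil

section Correlation

variable {n K : Type*} [Fintype n] [Field K]

lemma dotProduct_mulVec_smul_add_eq_one {G : Matrix n n K} {g p : n → K} {α : K}
    (hgp : g ⬝ᵥ G *ᵥ p ≠ 0)
    (hα : 1 / α = (g ⬝ᵥ G *ᵥ p) / (1 - g ⬝ᵥ G *ᵥ g)) : g ⬝ᵥ G *ᵥ (α • p + g) = 1 := by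
  have hα' : α = (1 - g ⬝ᵥ G *ᵥ g) / (g ⬝ᵥ G *ᵥ p) := by
    rw [← one_div_one_div α, hα, one_div_div]
  rw [mulVec_add, mulVec_smul, dotProduct_add, dotProduct_smul, smul_eq_mul, hα',
    div_mul_cancel₀ _ hgp, sub_add_cancel]

end Correlation

section WiretapChannel

variable {m n : Type*} [Fintype m]

/-- The covariance `[[I, a], [aᵀ, 1]]` of the joint noise of the receiver and the eavesdropper,
when these have correlation `a`. -/
def noiseCov [DecidableEq m] (a : m → ℝ) : Matrix (m ⊕ Unit) (m ⊕ Unit) ℝ :=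
  fromBlocks 1 (replicateCol Unit a) (replicateRow Unit a) 1

/-- The channel `[H; gᵀ]` of the enhanced receiver, who also observes the eavesdropper's signal. -/
def stackedChannel (H : Matrix m n ℝ) (g : n → ℝ) : Matrix (m ⊕ Unit) n ℝ :=
  fromRows H (replicateRow Unit g)

/-- The matrix `HᵀH - ggᵀ` of the quadratic form comparing the gains of the receiver and of the
eavesdropper. -/
def gapForm (H : Matrix m n ℝ) (g : n → ℝ) : Matrix n n ℝ := Hᵀ * H - vecMulVec g g

/-- The Gram matrix `H̄ᵀ N⁻¹ H̄` of the channel of the enhanced receiver after whitening of the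
noise of correlation `a`; meaningful for `‖a‖ ≠ 1`, where `N` is invertible. -/
noncomputable def enhancedGram [DecidableEq m] (H : Matrix m n ℝ) (g : n → ℝ) (a : m → ℝ) :
    Matrix n n ℝ :=
  (stackedChannel H g)ᵀ * ((noiseCov a)⁻¹ * stackedChannel H g)

lemma isSymm_gapForm (H : Matrix m n ℝ) (g : n → ℝ) : (gapForm H g).IsSymm :=
  IsSymm.sub (by rw [IsSymm, transpose_mul, transpose_transpose]) (isSymm_vecMulVec_self g)

lemma one_add_smul_gram_sub [DecidableEq n] (H : Matrix m n ℝ) (g : n → ℝ) (P : ℝ) :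
    (1 + P • (Hᵀ * H)) - (1 + P • vecMulVec g g) = P • gapForm H g := by
  rw [add_sub_add_left_eq_sub, ← smul_sub, gapForm]

lemma det_noiseCov [DecidableEq m] (a : m → ℝ) : (noiseCov a).det = 1 - a ⬝ᵥ a := by
  rw [noiseCov, det_fromBlocks_one₁₁, det_unique]
  rfl

lemma noiseCov_inv_mul_stackedChannel [DecidableEq m] (H : Matrix m n ℝ) (g : n → ℝ) {a : m → ℝ}
    (ha : a ⬝ᵥ a ≠ 1) :
    (noiseCov a)⁻¹ * stackedChannel H g =
      fromRows (H - (1 - a ⬝ᵥ a)⁻¹ • vecMulVec a (g - Hᵀ *ᵥ a))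
        (replicateRow Unit ((1 - a ⬝ᵥ a)⁻¹ • (g - Hᵀ *ᵥ a))) := by
  have hschur : 1 - a ⬝ᵥ a ≠ 0 := sub_ne_zero.mpr ha.symm
  have hN : IsUnit (noiseCov a).det := by rw [det_noiseCov]; exact hschur.isUnit
  have hsolve : noiseCov a * fromRows (H - (1 - a ⬝ᵥ a)⁻¹ • vecMulVec a (g - Hᵀ *ᵥ a))
      (replicateRow Unit ((1 - a ⬝ᵥ a)⁻¹ • (g - Hᵀ *ᵥ a))) = stackedChannel H g := by
    rw [noiseCov, stackedChannel, fromBlocks_mul_fromRows]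
    congr 1
    · rw [Matrix.one_mul, ← vecMulVec_eq, vecMulVec_smul, sub_add_cancel]
    · have hrow : a ᵥ* (H - (1 - a ⬝ᵥ a)⁻¹ • vecMulVec a (g - Hᵀ *ᵥ a))
          + (1 - a ⬝ᵥ a)⁻¹ • (g - Hᵀ *ᵥ a) = g := by
        have hw : (a ⬝ᵥ a) • (g - Hᵀ *ᵥ a) - (g - Hᵀ *ᵥ a) =
            -((1 - a ⬝ᵥ a) • (g - Hᵀ *ᵥ a)) := by module
        rw [vecMul_sub, vecMul_smul, vecMul_vecMulVec, ← mulVec_transpose, sub_add, ← smul_sub, hw,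
          smul_neg, inv_smul_smul₀ hschur, sub_neg_eq_add, add_sub_cancel]
      rw [Matrix.one_mul, ← replicateRow_vecMul, ← replicateRow_add, hrow]
  rw [← hsolve, nonsing_inv_mul_cancel_left _ _ hN]

lemma enhancedGram_eq [DecidableEq m] (H : Matrix m n ℝ) (g : n → ℝ) {a : m → ℝ}
    (ha : a ⬝ᵥ a ≠ 1) :
    enhancedGram H g a =
      Hᵀ * H + (1 - a ⬝ᵥ a)⁻¹ • vecMulVec (g - Hᵀ *ᵥ a) (g - Hᵀ *ᵥ a) := by
  rw [enhancedGram, noiseCov_inv_mul_stackedChannel H g ha, stackedChannel, transpose_fromRows,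
    fromCols_mul_fromRows, transpose_replicateRow, ← vecMulVec_eq, vecMulVec_smul, Matrix.mul_sub,
    Matrix.mul_smul, mul_vecMulVec, sub_add, ← smul_sub, ← sub_vecMulVec, ← neg_sub g,
    neg_vecMulVec, smul_neg, sub_neg_eq_add]

lemma posSemidef_enhancedGram_sub [DecidableEq m] [Finite n] (H : Matrix m n ℝ) (g : n → ℝ)
    {a : m → ℝ} (ha : a ⬝ᵥ a < 1) : (enhancedGram H g a - Hᵀ * H).PosSemidef := by
  rw [enhancedGram_eq H g ha.ne, add_sub_cancel_left]
  exact posSemidef_smul_vecMulVec_self (inv_nonneg.mpr (sub_nonneg.mpr ha.le)) _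

lemma posSemidef_enhancedGram [DecidableEq m] [Finite n] (H : Matrix m n ℝ) (g : n → ℝ)
    {a : m → ℝ} (ha : a ⬝ᵥ a < 1) : (enhancedGram H g a).PosSemidef := by
  simpa only [sub_add_cancel] using
    (posSemidef_enhancedGram_sub H g ha).add (posSemidef_transpose_mul_self H)

variable [Fintype n]

lemma gapForm_mulVec (H : Matrix m n ℝ) (g v : n → ℝ) :
    gapForm H g *ᵥ v = (Hᵀ * H) *ᵥ v - (g ⬝ᵥ v) • g := by
  rw [gapForm, sub_mulVec, vecMulVec_mulVec, op_smul_eq_smul]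

lemma gapForm_mulVec_inv_mulVec [DecidableEq n] {H : Matrix m n ℝ} (hH : IsUnit (Hᵀ * H).det)
    (g w : n → ℝ) :
    gapForm H g *ᵥ (Hᵀ * H)⁻¹ *ᵥ w = w - (g ⬝ᵥ (Hᵀ * H)⁻¹ *ᵥ w) • g := by
  rw [gapForm_mulVec, mulVec_mulVec, mul_nonsing_inv _ hH, one_mulVec]

lemma dotProduct_gapForm_mulVec (H : Matrix m n ℝ) (g v : n → ℝ) :
    v ⬝ᵥ gapForm H g *ᵥ v = v ⬝ᵥ (Hᵀ * H) *ᵥ v - (g ⬝ᵥ v) ^ 2 := by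
  rw [gapForm_mulVec, dotProduct_sub, dotProduct_smul, smul_eq_mul, dotProduct_comm v g, sq]

lemma det_gapForm [DecidableEq n] {H : Matrix m n ℝ} (hH : IsUnit (Hᵀ * H).det) (g : n → ℝ) :
    (gapForm H g).det = (Hᵀ * H).det * (1 - g ⬝ᵥ (Hᵀ * H)⁻¹ *ᵥ g) := by
  rw [gapForm, sub_eq_add_neg, ← neg_vecMulVec, det_add_vecMulVec hH, mulVec_neg, dotProduct_neg,
    ← sub_eq_add_neg]

lemma det_gapForm_neg [DecidableEq n] {H : Matrix m n ℝ} (hH : IsUnit (Hᵀ * H).det) {g : n → ℝ}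
    (hg : 1 < g ⬝ᵥ (Hᵀ * H)⁻¹ *ᵥ g) : (gapForm H g).det < 0 := by
  rw [det_gapForm hH]
  exact mul_neg_of_pos_of_neg
    ((posSemidef_transpose_mul_self H).det_nonneg.lt_of_ne hH.ne_zero.symm) (sub_neg.mpr hg)

lemma one_sub_mulVec_dotProduct_mulVec (H : Matrix m n ℝ) {g x : n → ℝ} (hgx : g ⬝ᵥ x = 1) :
    1 - H *ᵥ x ⬝ᵥ H *ᵥ x = -(x ⬝ᵥ gapForm H g *ᵥ x) := by
  rw [dotProduct_gapForm_mulVec, hgx, ← mulVec_mulVec, dotProduct_transpose_mulVec]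
  ring

lemma mulVec_dotProduct_mulVec_lt_one {H : Matrix m n ℝ} {g x : n → ℝ} (hgx : g ⬝ᵥ x = 1)
    (hxE : x ⬝ᵥ gapForm H g *ᵥ x < 0) : H *ᵥ x ⬝ᵥ H *ᵥ x < 1 := by
  linarith [one_sub_mulVec_dotProduct_mulVec H hgx]

lemma mulVec_inv_transpose_mul_self [DecidableEq n] {H : Matrix n n ℝ} (hH : IsUnit H.det)
    (w : n → ℝ) : H *ᵥ (Hᵀ * H)⁻¹ *ᵥ w = Hᵀ⁻¹ *ᵥ w := by
  rw [Matrix.mul_inv_rev, mulVec_mulVec, mul_nonsing_inv_cancel_left _ _ hH]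

lemma det_one_add_inv_noiseCov_mul [DecidableEq m] [DecidableEq n] (H : Matrix m n ℝ) (g : n → ℝ)
    (a : m → ℝ) (S : Matrix n n ℝ) :
    (1 + (noiseCov a)⁻¹ * (stackedChannel H g * S * (stackedChannel H g)ᵀ)).det =
      (1 + S * enhancedGram H g a).det := by
  rw [← Matrix.mul_assoc, det_one_add_mul_comm, det_one_add_mul_comm S, enhancedGram]
  simp only [Matrix.mul_assoc]

lemma enhancedGram_mulVec [DecidableEq m] (H : Matrix m n ℝ) {g x : n → ℝ} (hgx : g ⬝ᵥ x = 1)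
    (hx : x ⬝ᵥ gapForm H g *ᵥ x ≠ 0) :
    enhancedGram H g (H *ᵥ x) = Hᵀ * H -
      (x ⬝ᵥ gapForm H g *ᵥ x)⁻¹ • vecMulVec (gapForm H g *ᵥ x) (gapForm H g *ᵥ x) := by
  have hw : g - Hᵀ *ᵥ (H *ᵥ x) = -(gapForm H g *ᵥ x) := by
    rw [gapForm_mulVec, hgx, one_smul, mulVec_mulVec, neg_sub]
  have hschur := one_sub_mulVec_dotProduct_mulVec H hgx
  have hHx : H *ᵥ x ⬝ᵥ H *ᵥ x ≠ 1 := by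
    rw [ne_comm, ← sub_ne_zero, hschur]
    exact neg_ne_zero.mpr hx
  rw [enhancedGram_eq H g hHx, hschur, hw, neg_vecMulVec, vecMulVec_neg,
    neg_neg, inv_neg, neg_smul, sub_eq_add_neg]

end WiretapChannel

section SecrecyRate

variable {n : Type*} [Fintype n] [DecidableEq n]

/-- The rate `½ log (det (I + S M) / (1 + gᵀSg))` at which an input of covariance `S` communicates
in secret, for a receiver whose channel has Gram matrix `M` and an eavesdropper with gain `g`. -/
noncomputable def secrecyRate (g : n → ℝ) (M S : Matrix n n ℝ) : ℝ :=
  1 / 2 * Real.log ((1 + S * M).det / (1 + g ⬝ᵥ S *ᵥ g))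

lemma secrecyRate_transpose_mul_self {m : Type*} [Fintype m] [DecidableEq m] (H : Matrix m n ℝ)
    (g : n → ℝ) {S : Matrix n n ℝ} (hS : S.PosSemidef) :
    secrecyRate g (Hᵀ * H) S =
      1 / 2 * Real.log (1 + H * S * Hᵀ).det - 1 / 2 * Real.log (1 + g ⬝ᵥ S *ᵥ g) := by
  rw [secrecyRate, ← mul_sub, ← det_one_add_transpose_mul_self_mul, det_one_add_mul_comm _ S,
    Real.log_div (det_one_add_mul_pos hS (posSemidef_transpose_mul_self H)).ne'
      (one_add_dotProduct_mulVec_pos hS g).ne']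

-- The bound is attained by beamforming with full power along `q`, that is, by `S = P qqᵀ`.
lemma isGreatest_secrecyRate {M : Matrix n n ℝ} (hM : M.PosSemidef) {g q : n → ℝ} {P l : ℝ}
    (hP : 0 ≤ P) (hq : q ⬝ᵥ q = 1)
    (hbeam : 1 + P * (q ⬝ᵥ M *ᵥ q) = l * (1 + P * (g ⬝ᵥ q) ^ 2))
    (hle : ∀ S : Matrix n n ℝ, S.PosSemidef → S.trace ≤ P →
      (1 + S * M).det ≤ l * (1 + g ⬝ᵥ S *ᵥ g)) :
    IsGreatest {r | ∃ S : Matrix n n ℝ, S.PosSemidef ∧ S.trace ≤ P ∧ r = secrecyRate g M S}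
      (1 / 2 * Real.log l) := by
  have hgain : g ⬝ᵥ (P • vecMulVec q q) *ᵥ g = P * (g ⬝ᵥ q) ^ 2 := by
    rw [smul_mulVec, dotProduct_smul, dotProduct_vecMulVec_mulVec, dotProduct_comm q, smul_eq_mul,
      sq]
  have hbeam_psd := posSemidef_smul_vecMulVec_self hP q
  refine ⟨⟨P • vecMulVec q q, hbeam_psd, ?_, ?_⟩, ?_⟩
  · rw [trace_smul, trace_vecMulVec, hq, smul_eq_mul, mul_one]
  · have hpos := one_add_dotProduct_mulVec_pos hbeam_psd g
    rw [secrecyRate, det_one_add_smul_vecMulVec_mul, hbeam, ← hgain,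
      mul_div_cancel_right₀ _ hpos.ne']
  · rintro _ ⟨S, hS, htr, rfl⟩
    have hpos := one_add_dotProduct_mulVec_pos hS g
    have hlog := Real.log_le_log (div_pos (det_one_add_mul_pos hS hM) hpos)
      ((div_le_iff₀ hpos).mpr (hle S hS htr))
    rw [secrecyRate]
    linarith

end SecrecyRate

section SaddlePoint

variable {m n : Type*} [Fintype m] [Fintype n] {H : Matrix m n ℝ} {g q : n → ℝ} {P l : ℝ}

lemma smul_gapForm_mulVec_of_eigenvector [DecidableEq n] (hP : 0 ≤ P)
    (h : ((1 + P • vecMulVec g g)⁻¹ * (1 + P • (Hᵀ * H))) *ᵥ q = l • q) :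
    P • gapForm H g *ᵥ q = (l - 1) • (q + (P * (g ⬝ᵥ q)) • g) := by
  have hB : IsUnit (1 + P • vecMulVec g g).det :=
    (PosDef.one.add_posSemidef (posSemidef_smul_vecMulVec_self hP g)).det_pos.ne'.isUnit
  rw [← smul_mulVec, ← one_add_smul_gram_sub, sub_mulVec_eq_of_inv_mul_mulVec_eq hB h, add_mulVec,
    one_mulVec, smul_mulVec, vecMulVec_mulVec, op_smul_eq_smul, smul_smul]

lemma one_lt_of_det_gapForm_neg [DecidableEq n] (hn : Even (Fintype.card n)) (hP : 0 < P)
    (hdet : (gapForm H g).det < 0) {R : Matrix n n ℝ} (hR : R.PosDef)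
    (hRB : R * R = 1 + P • vecMulVec g g)
    (hl : IsGreatest {μ : ℝ | ∃ v : n → ℝ, v ≠ 0 ∧
      (R⁻¹ * (1 + P • (Hᵀ * H)) * R⁻¹) *ᵥ v = μ • v} l) : 1 < l := by
  obtain ⟨v, hv⟩ := exists_dotProduct_mulVec_pos_of_det_neg hn (isSymm_gapForm H g) hdet
  have hC : (1 + P • (Hᵀ * H)).IsSymm :=
    isSymm_of_posSemidef (PosSemidef.one.add ((posSemidef_transpose_mul_self H).smul hP.le))
  refine one_lt_of_isGreatest_eigenvalue hR hC hl (v := v) ?_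
  rw [hRB, one_add_smul_gram_sub, smul_mulVec, dotProduct_smul, smul_eq_mul]
  exact mul_pos hP hv

lemma one_add_mul_dotProduct_gram_mulVec (hq : q ⬝ᵥ q = 1)
    (heig : P • gapForm H g *ᵥ q = (l - 1) • (q + (P * (g ⬝ᵥ q)) • g)) :
    1 + P * (q ⬝ᵥ (Hᵀ * H) *ᵥ q) = l * (1 + P * (g ⬝ᵥ q) ^ 2) := by
  have hqE := congrArg (q ⬝ᵥ ·) heig
  simp only [dotProduct_smul, dotProduct_add, smul_eq_mul, hq, dotProduct_comm q g,
    dotProduct_gapForm_mulVec] at hqE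
  linear_combination hqE

lemma dotProduct_gapForm_mulVec_eq (hP : P ≠ 0) (hq : q ⬝ᵥ q = 1)
    (heig : P • gapForm H g *ᵥ q = (l - 1) • (q + (P * (g ⬝ᵥ q)) • g)) :
    q ⬝ᵥ gapForm H g *ᵥ q = (l - 1) / P * (1 + P * (g ⬝ᵥ q) ^ 2) := by
  have hgram := one_add_mul_dotProduct_gram_mulVec hq heig
  rw [dotProduct_gapForm_mulVec, div_mul_eq_mul_div, eq_div_iff hP]
  linear_combination hgram

lemma dotProduct_gapForm_mulVec_pos (hP : 0 < P) (hl : 1 < l) (hq : q ⬝ᵥ q = 1)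
    (heig : P • gapForm H g *ᵥ q = (l - 1) • (q + (P * (g ⬝ᵥ q)) • g)) :
    0 < q ⬝ᵥ gapForm H g *ᵥ q := by
  have := sub_pos.mpr hl
  rw [dotProduct_gapForm_mulVec_eq hP.ne' hq heig]
  positivity

lemma det_one_add_mul_rankTwo_le_mul [DecidableEq n] {S : Matrix n n ℝ} (hS : S.PosSemidef)
    (htr : S.trace ≤ P) (hP : 0 < P) (hl : 1 ≤ l) (hq : q ⬝ᵥ q = 1) (g : n → ℝ) :
    (1 + S * (vecMulVec g g + ((l - 1) / (P * (1 + P * (g ⬝ᵥ q) ^ 2))) •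
      vecMulVec (q + (P * (g ⬝ᵥ q)) • g) (q + (P * (g ⬝ᵥ q)) • g))).det ≤
      l * (1 + g ⬝ᵥ S *ᵥ g) := by
  set t := (l - 1) / (P * (1 + P * (g ⬝ᵥ q) ^ 2))
  have ht0 : 0 ≤ t := div_nonneg (sub_nonneg.mpr hl) (by positivity)
  have hqS : q ⬝ᵥ S *ᵥ q ≤ P :=
    (dotProduct_mulVec_le_trace_mul hS q).trans (by rwa [hq, mul_one])
  calc _ ≤ (1 + g ⬝ᵥ S *ᵥ g) * (1 + t * (q ⬝ᵥ S *ᵥ q + (P * (g ⬝ᵥ q)) ^ 2)) :=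
        det_one_add_mul_rankTwo_le (isSymm_of_posSemidef hS) ht0 g q _
    _ ≤ (1 + g ⬝ᵥ S *ᵥ g) * (1 + t * (P + (P * (g ⬝ᵥ q)) ^ 2)) := by
        have := one_add_dotProduct_mulVec_pos hS g
        gcongr
    _ = l * (1 + g ⬝ᵥ S *ᵥ g) := by
        have hl_eq : t * (P * (1 + P * (g ⬝ᵥ q) ^ 2)) = l - 1 :=
          div_mul_cancel₀ _ (by positivity)
        linear_combination (1 + g ⬝ᵥ S *ᵥ g) * hl_eq

end SaddlePoint

section TwoInputChannel

variable {m : Type*} [Fintype m] {H : Matrix m (Fin 2) ℝ} {g q x : Fin 2 → ℝ} {P l : ℝ}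

lemma dotProduct_gapForm_mulVec_neg (hdet : (gapForm H g).det < 0)
    (hqE : 0 < q ⬝ᵥ gapForm H g *ᵥ q) (hgx : g ⬝ᵥ x = 1) (hqx : q ⬝ᵥ gapForm H g *ᵥ x = 0) :
    x ⬝ᵥ gapForm H g *ᵥ x < 0 := by
  refine dotProduct_mulVec_neg_of_det_neg (isSymm_gapForm H g) hdet hqE ?_ hqx
  rintro rfl
  rw [dotProduct_zero] at hgx
  exact zero_ne_one hgx

variable [DecidableEq m]

lemma enhancedGram_mulVec_of_orthogonal (hgx : g ⬝ᵥ x = 1)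
    (hqE : q ⬝ᵥ gapForm H g *ᵥ q ≠ 0) (hxE : x ⬝ᵥ gapForm H g *ᵥ x ≠ 0)
    (hqx : q ⬝ᵥ gapForm H g *ᵥ x = 0) :
    enhancedGram H g (H *ᵥ x) = vecMulVec g g +
      (q ⬝ᵥ gapForm H g *ᵥ q)⁻¹ • vecMulVec (gapForm H g *ᵥ q) (gapForm H g *ᵥ q) := by
  have hsplit := eq_add_smul_vecMulVec_of_orthogonal (isSymm_gapForm H g) hqE hxE hqx
  have hgram : Hᵀ * H = vecMulVec g g + gapForm H g := by rw [gapForm, add_sub_cancel]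
  rw [enhancedGram_mulVec H hgx hxE, hgram, sub_eq_iff_eq_add, add_assoc, ← hsplit]

lemma enhancedGram_mulVec_eq_rankTwo (hP : 0 < P) (hl : 1 < l) (hq : q ⬝ᵥ q = 1)
    (heig : P • gapForm H g *ᵥ q = (l - 1) • (q + (P * (g ⬝ᵥ q)) • g))
    (hgx : g ⬝ᵥ x = 1) (hxE : x ⬝ᵥ gapForm H g *ᵥ x ≠ 0) (hqx : q ⬝ᵥ gapForm H g *ᵥ x = 0) :
    enhancedGram H g (H *ᵥ x) =
      vecMulVec g g + ((l - 1) / (P * (1 + P * (g ⬝ᵥ q) ^ 2))) •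
        vecMulVec (q + (P * (g ⬝ᵥ q)) • g) (q + (P * (g ⬝ᵥ q)) • g) := by
  have hqE := dotProduct_gapForm_mulVec_pos hP hl hq heig
  have hEq : gapForm H g *ᵥ q = ((l - 1) / P) • (q + (P * (g ⬝ᵥ q)) • g) := by
    rw [div_eq_inv_mul, mul_smul, ← heig, inv_smul_smul₀ hP.ne']
  rw [enhancedGram_mulVec_of_orthogonal hgx hqE.ne' hxE hqx,
    dotProduct_gapForm_mulVec_eq hP.ne' hq heig, hEq, smul_vecMulVec, vecMulVec_smul, smul_smul,
    smul_smul]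
  have := (sub_pos.mpr hl).ne'
  congr 2
  field_simp

lemma dotProduct_enhancedGram_mulVec (hgx : g ⬝ᵥ x = 1) (hxE : x ⬝ᵥ gapForm H g *ᵥ x ≠ 0)
    (hqx : q ⬝ᵥ gapForm H g *ᵥ x = 0) :
    q ⬝ᵥ enhancedGram H g (H *ᵥ x) *ᵥ q = q ⬝ᵥ (Hᵀ * H) *ᵥ q := by
  rw [enhancedGram_mulVec H hgx hxE, sub_mulVec, dotProduct_sub, smul_mulVec, dotProduct_smul,
    dotProduct_vecMulVec_mulVec, hqx, zero_mul, smul_zero, sub_zero]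

lemma det_one_add_mul_enhancedGram_le (hP : 0 < P) (hl : 1 < l) (hq : q ⬝ᵥ q = 1)
    (heig : P • gapForm H g *ᵥ q = (l - 1) • (q + (P * (g ⬝ᵥ q)) • g))
    (hgx : g ⬝ᵥ x = 1) (hxE : x ⬝ᵥ gapForm H g *ᵥ x ≠ 0) (hqx : q ⬝ᵥ gapForm H g *ᵥ x = 0)
    {S : Matrix (Fin 2) (Fin 2) ℝ} (hS : S.PosSemidef) (htr : S.trace ≤ P) :
    (1 + S * enhancedGram H g (H *ᵥ x)).det ≤ l * (1 + g ⬝ᵥ S *ᵥ g) := by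
  rw [enhancedGram_mulVec_eq_rankTwo hP hl hq heig hgx hxE hqx]
  exact det_one_add_mul_rankTwo_le_mul hS htr hP hl.le hq g

theorem isGreatest_secrecyRate_enhancedGram (hP : 0 < P) (hl : 1 < l) (hq : q ⬝ᵥ q = 1)
    (heig : P • gapForm H g *ᵥ q = (l - 1) • (q + (P * (g ⬝ᵥ q)) • g))
    (hgx : g ⬝ᵥ x = 1) (hxE : x ⬝ᵥ gapForm H g *ᵥ x < 0) (hqx : q ⬝ᵥ gapForm H g *ᵥ x = 0) :
    IsGreatest {r | ∃ S : Matrix (Fin 2) (Fin 2) ℝ, S.PosSemidef ∧ S.trace ≤ P ∧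
      r = secrecyRate g (enhancedGram H g (H *ᵥ x)) S} (1 / 2 * Real.log l) := by
  have hHx : H *ᵥ x ⬝ᵥ H *ᵥ x < 1 := mulVec_dotProduct_mulVec_lt_one hgx hxE
  refine isGreatest_secrecyRate (posSemidef_enhancedGram H g hHx) hP.le hq ?_ fun S hS htr =>
    det_one_add_mul_enhancedGram_le hP hl hq heig hgx hxE.ne hqx hS htr
  rw [dotProduct_enhancedGram_mulVec hgx hxE.ne hqx, one_add_mul_dotProduct_gram_mulVec hq heig]

theorem isGreatest_achievableRate (hP : 0 < P) (hl : 1 < l) (hq : q ⬝ᵥ q = 1)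
    (heig : P • gapForm H g *ᵥ q = (l - 1) • (q + (P * (g ⬝ᵥ q)) • g))
    (hgx : g ⬝ᵥ x = 1) (hxE : x ⬝ᵥ gapForm H g *ᵥ x < 0) (hqx : q ⬝ᵥ gapForm H g *ᵥ x = 0) :
    IsGreatest {r | ∃ S : Matrix (Fin 2) (Fin 2) ℝ, S.PosSemidef ∧ S.trace ≤ P ∧
      r = 1 / 2 * Real.log (1 + H * S * Hᵀ).det - 1 / 2 * Real.log (1 + g ⬝ᵥ S *ᵥ g)}
      (1 / 2 * Real.log l) := by
  have hrate (r : ℝ) (S : Matrix (Fin 2) (Fin 2) ℝ) :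
      (S.PosSemidef ∧ S.trace ≤ P ∧
        r = 1 / 2 * Real.log (1 + H * S * Hᵀ).det - 1 / 2 * Real.log (1 + g ⬝ᵥ S *ᵥ g)) ↔
      S.PosSemidef ∧ S.trace ≤ P ∧ r = secrecyRate g (Hᵀ * H) S :=
    and_congr_right fun hS => by rw [secrecyRate_transpose_mul_self H g hS]
  simp only [hrate]
  have hHx : H *ᵥ x ⬝ᵥ H *ᵥ x < 1 := mulVec_dotProduct_mulVec_lt_one hgx hxE
  refine isGreatest_secrecyRate (posSemidef_transpose_mul_self H) hP.le hq
    (one_add_mul_dotProduct_gram_mulVec hq heig) fun S hS htr => ?_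
  exact (det_one_add_mul_le_det_one_add_mul hS (posSemidef_transpose_mul_self H)
    (posSemidef_enhancedGram_sub H g hHx)).trans
    (det_one_add_mul_enhancedGram_le hP hl hq heig hgx hxE.ne hqx hS htr)

end TwoInputChannel

/-- Secrecy capacity of the 2-2-1 Gaussian MIMO wiretap channel. Let `H` be
invertible 2×2, `g` with `gᵀ(HᵀH)⁻¹g > 1`, `P > 0`, `R` the symmetric positive
definite square root of `B = I + P g gᵀ`, `λ₁` the largest eigenvalue of
`R⁻¹(I + P HᵀH)R⁻¹`, `q_a` a unit vector with `B⁻¹(I + P HᵀH) q_a = λ₁ q_a`, and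
`q⊥` a unit vector orthogonal to `q_a` with `gᵀ(HᵀH)⁻¹q⊥ ≠ 0`. Define `α*` by
`1/α* = gᵀ(HᵀH)⁻¹q⊥/(1 − gᵀ(HᵀH)⁻¹g)` and `a* = H^{-T}(α* q⊥ + g)`, so that
`‖a*‖ < 1`. With `N* = [[I, a*],[a*ᵀ, 1]]`, `H̄ = [H; gᵀ]` and
`U(S) = (1/2) log( det(I + (N*)⁻¹ H̄ S H̄ᵀ)/(1 + gᵀSg) )`, the maximum of `U`
over positive semidefinite `S` with `tr S ≤ P` equals `(1/2) log λ₁`, and so does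
the maximum of the achievable rate
`(1/2) log det(I + H S Hᵀ) − (1/2) log(1 + gᵀSg)`. -/
theorem stmt15 (H R : Matrix (Fin 2) (Fin 2) ℝ) (g qa qp : Fin 2 → ℝ)
    (P lam1 alphas : ℝ)
    (hH : IsUnit H.det) (hg : 1 < g ⬝ᵥ (Hᵀ * H)⁻¹.mulVec g) (hP : 0 < P)
    (hR : R.PosDef) (hRB : R * R = 1 + P • vecMulVec g g)
    (hlam : IsGreatest {μ : ℝ | ∃ v : Fin 2 → ℝ, v ≠ 0 ∧
      (R⁻¹ * (1 + P • (Hᵀ * H)) * R⁻¹).mulVec v = μ • v} lam1)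
    (hqa : qa ⬝ᵥ qa = 1)
    (hqae : ((1 + P • vecMulVec g g)⁻¹ * (1 + P • (Hᵀ * H))).mulVec qa
      = lam1 • qa)
    (hqp : qp ⬝ᵥ qp = 1) (horth : qa ⬝ᵥ qp = 0)
    (hgqp : g ⬝ᵥ (Hᵀ * H)⁻¹.mulVec qp ≠ 0)
    (halphas : 1 / alphas =
      (g ⬝ᵥ (Hᵀ * H)⁻¹.mulVec qp) / (1 - g ⬝ᵥ (Hᵀ * H)⁻¹.mulVec g)) :
    let astar : Fin 2 → ℝ := (Hᵀ)⁻¹.mulVec (alphas • qp + g)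
    let N : Matrix (Fin 2 ⊕ Unit) (Fin 2 ⊕ Unit) ℝ :=
      Matrix.fromBlocks 1 (Matrix.of fun i (_ : Unit) => astar i)
        (Matrix.of fun (_ : Unit) j => astar j) 1
    let Hbar : Matrix (Fin 2 ⊕ Unit) (Fin 2) ℝ :=
      Matrix.fromRows H (Matrix.of fun (_ : Unit) j => g j)
    let U : Matrix (Fin 2) (Fin 2) ℝ → ℝ := fun S =>
      (1 / 2) * Real.log
        (((1 : Matrix (Fin 2 ⊕ Unit) (Fin 2 ⊕ Unit) ℝ)
            + N⁻¹ * (Hbar * S * Hbarᵀ)).det / (1 + g ⬝ᵥ S.mulVec g))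
    Real.sqrt (astar ⬝ᵥ astar) < 1
    ∧ IsGreatest {r : ℝ | ∃ S : Matrix (Fin 2) (Fin 2) ℝ,
        S.PosSemidef ∧ S.trace ≤ P ∧ r = U S} ((1 / 2) * Real.log lam1)
    ∧ IsGreatest {r : ℝ | ∃ S : Matrix (Fin 2) (Fin 2) ℝ,
        S.PosSemidef ∧ S.trace ≤ P ∧
        r = (1 / 2) * Real.log ((1 + H * S * Hᵀ).det)
          - (1 / 2) * Real.log (1 + g ⬝ᵥ S.mulVec g)}
      ((1 / 2) * Real.log lam1) := by
  intro astar N Hbar U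
  have hgram : IsUnit (Hᵀ * H).det := by rw [det_mul, det_transpose]; exact hH.mul hH
  set x := (Hᵀ * H)⁻¹ *ᵥ (alphas • qp + g)
  have hHx : H *ᵥ x = astar := mulVec_inv_transpose_mul_self hH _
  have hgx : g ⬝ᵥ x = 1 := dotProduct_mulVec_smul_add_eq_one hgqp halphas
  have hqx : qa ⬝ᵥ gapForm H g *ᵥ x = 0 := by
    rw [gapForm_mulVec_inv_mulVec hgram, hgx, one_smul, add_sub_cancel_right, dotProduct_smul,
      horth, smul_zero]
  have hdet := det_gapForm_neg hgram hg
  have hl : 1 < lam1 := one_lt_of_det_gapForm_neg (by simp) hP hdet hR hRB hlam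
  have heig := smul_gapForm_mulVec_of_eigenvector hP.le hqae
  have hqE := dotProduct_gapForm_mulVec_pos hP hl hqa heig
  have hxE := dotProduct_gapForm_mulVec_neg hdet hqE hgx hqx
  have hU (S) : U S = secrecyRate g (enhancedGram H g (H *ᵥ x)) S := by
    rw [secrecyRate, ← det_one_add_inv_noiseCov_mul, hHx]
    rfl
  refine ⟨?_, ?_, isGreatest_achievableRate hP hl hqa heig hgx hxE hqx⟩
  · rw [Real.sqrt_lt' one_pos, one_pow, ← hHx]
    exact mulVec_dotProduct_mulVec_lt_one hgx hxE
  · simpa only [hU] using isGreatest_secrecyRate_enhancedGram hP hl hqa heig hgx hxE hqx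
end
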